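/- arXiv:1209.4582 — 6 statements merged into one kernel-verified Lean document; each statement's English description precedes it below -/
import Mathlib

section
/- Let 1 < p ≤ 2. There exists a constant C = C(p) > 0 such that for all complex numbers a, b, c one has | |a+c|^p − |a|^p − |b+c|^p + |b|^p | ≤ C · |a−b| · |c|^{p−1}. -/
lemma aux_holder (p : ℝ) (hp1 : 1 < p) (hp2 : p ≤ 2) (x y : ℂ) (hxy : ‖y‖ ≤ ‖x‖) :
    ‖(‖x‖ ^ (p - 2)) • x - (‖y‖ ^ (p - 2)) • y‖ ≤ 4 * ‖x - y‖ ^ (p - 1) := by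
  by_cases hd : x = y
  · subst hd
    simp only [sub_self, norm_zero]
    positivity
  have hdpos : 0 < ‖x - y‖ := norm_pos_iff.2 (sub_ne_zero.2 hd)
  have hd2 : ‖x - y‖ / 2 ≤ ‖x‖ := by
    have := norm_sub_le x y
    linarith
  have hx : 0 < ‖x‖ := by linarith
  have hmul : ∀ t : ℝ, 0 < t → t ^ (p - 1) = t ^ (p - 2) * t := by
    intro t ht
    rw [← Real.rpow_add_one ht.ne']
    congr 1; ring
  have e : (‖x‖ ^ (p - 2)) • x - (‖y‖ ^ (p - 2)) • y
      = (‖x‖ ^ (p - 2)) • (x - y) - (‖y‖ ^ (p - 2) - ‖x‖ ^ (p - 2)) • y := by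
    rw [smul_sub, sub_smul]; abel
  have hrev : ‖x‖ - ‖y‖ ≤ ‖x - y‖ := norm_sub_norm_le x y
  have hxn : 0 ≤ ‖x‖ ^ (p - 2) := by positivity
  have h2 : ‖(‖y‖ ^ (p - 2) - ‖x‖ ^ (p - 2)) • y‖ ≤ ‖x‖ ^ (p - 2) * ‖x - y‖ := by
    rcases (norm_nonneg y).eq_or_lt with hy | hy
    · rw [norm_smul, ← hy, mul_zero]
      positivity
    · have h3 : ‖x‖ ^ (p - 2) ≤ ‖y‖ ^ (p - 2) :=
        Real.rpow_le_rpow_of_nonpos hy hxy (by linarith)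
      have h4 : ‖y‖ ^ (p - 1) ≤ ‖x‖ ^ (p - 1) :=
        Real.rpow_le_rpow hy.le hxy (by linarith)
      rw [hmul _ hy, hmul _ hx] at h4
      rw [norm_smul, Real.norm_of_nonneg (by linarith)]
      nlinarith [mul_le_mul_of_nonneg_left hrev hxn]
  have h5 : ‖x‖ ^ (p - 2) ≤ (‖x - y‖ / 2) ^ (p - 2) :=
    Real.rpow_le_rpow_of_nonpos (by linarith) hd2 (by linarith)
  have h6 : (‖x - y‖ / 2) ^ (p - 1) ≤ ‖x - y‖ ^ (p - 1) :=
    Real.rpow_le_rpow (by linarith) (by linarith) (by linarith)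
  rw [hmul (‖x - y‖ / 2) (by linarith)] at h6
  have h7 : ‖(‖x‖ ^ (p - 2)) • (x - y)‖ = ‖x‖ ^ (p - 2) * ‖x - y‖ := by
    rw [norm_smul, Real.norm_of_nonneg hxn]
  rw [e]
  refine (norm_sub_le _ _).trans ?_
  have h8 := mul_le_mul_of_nonneg_right h5 hdpos.le
  linarith

lemma aux_holder' (p : ℝ) (hp1 : 1 < p) (hp2 : p ≤ 2) (x y : ℂ) :
    ‖(‖x‖ ^ (p - 2)) • x - (‖y‖ ^ (p - 2)) • y‖ ≤ 4 * ‖x - y‖ ^ (p - 1) := by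
  rcases le_total ‖y‖ ‖x‖ with h | h
  · exact aux_holder p hp1 hp2 x y h
  · rw [norm_sub_rev, norm_sub_rev x y]
    exact aux_holder p hp1 hp2 y x h

/-- Lemma A.1: For `1 < p ≤ 2` there is `C = C(p) > 0` such that for all complex `a b c`,
`| |a+c|^p − |a|^p − |b+c|^p + |b|^p | ≤ C |a−b| |c|^{p−1}`. -/
theorem second_difference_estimate (p : ℝ) (hp1 : 1 < p) (hp2 : p ≤ 2) :
    ∃ C : ℝ, 0 < C ∧ ∀ a b c : ℂ,
      |‖a + c‖ ^ p - ‖a‖ ^ p - ‖b + c‖ ^ p + ‖b‖ ^ p| ≤ C * ‖a - b‖ * ‖c‖ ^ (p - 1) := by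
  refine ⟨p * 4, by linarith, fun a b c => ?_⟩
  have hder : ∀ x ∈ (Set.univ : Set ℂ), HasFDerivWithinAt
      (fun x : ℂ => ‖x + c‖ ^ p - ‖x‖ ^ p)
      ((p * ‖x + c‖ ^ (p - 2)) • innerSL ℝ (x + c) - (p * ‖x‖ ^ (p - 2)) • innerSL ℝ x)
      Set.univ x := by
    intro x _
    have h1 : HasFDerivAt (fun x : ℂ => ‖x + c‖ ^ p)
        ((p * ‖x + c‖ ^ (p - 2)) • innerSL ℝ (x + c)) x :=
      (hasFDerivAt_comp_add_right (f := fun x : ℂ => ‖x‖ ^ p) c).2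
        (hasFDerivAt_norm_rpow (x + c) hp1)
    exact (h1.sub
      (hasFDerivAt_norm_rpow x hp1)).hasFDerivWithinAt
  have hb : ∀ x ∈ (Set.univ : Set ℂ),
      ‖(p * ‖x + c‖ ^ (p - 2)) • innerSL ℝ (x + c) - (p * ‖x‖ ^ (p - 2)) • innerSL ℝ x‖
        ≤ p * 4 * ‖c‖ ^ (p - 1) := by
    intro x _
    have e : (p * ‖x + c‖ ^ (p - 2)) • innerSL ℝ (x + c) - (p * ‖x‖ ^ (p - 2)) • innerSL ℝ x
        = innerSL ℝ (p • ((‖x + c‖ ^ (p - 2)) • (x + c) - (‖x‖ ^ (p - 2)) • x)) := by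
      ext z <;> simp [smul_sub, inner_sub_left, inner_smul_left, mul_assoc] <;> ring
    rw [e, innerSL_apply_norm, norm_smul, Real.norm_of_nonneg (by linarith)]
    have := aux_holder' p hp1 hp2 (x + c) x
    rw [add_sub_cancel_left] at this
    rw [mul_assoc]
    exact mul_le_mul_of_nonneg_left this (by linarith)
  have := convex_univ.norm_image_sub_le_of_norm_hasFDerivWithin_le hder hb
    (Set.mem_univ b) (Set.mem_univ a)
  rw [Real.norm_eq_abs] at this
  calc _ = |‖a + c‖ ^ p - ‖a‖ ^ p - (‖b + c‖ ^ p - ‖b‖ ^ p)| := by congr 1; ring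
    _ ≤ _ := this
    _ = _ := by ring
end

section
/- Let p > 2. There exists a constant C = C(p) > 0 such that for all complex numbers a, b, c one has | |a+c|^p − |a|^p − |b+c|^p + |b|^p | ≤ C · |a−b| · |c| · ( |a|^{p−2} + |b|^{p−2} + |c|^{p−2} ). -/
lemma aux_real (q s r : ℝ) (hq : 0 < q) (hr : 0 ≤ r) (hrs : r ≤ s) :
    (s ^ q - r ^ q) * r ≤ (q + 1) * s ^ q * (s - r) := by
  rcases hr.eq_or_lt with h0 | hr0
  · subst h0
    have := Real.rpow_nonneg hrs q
    simp only [mul_zero, sub_zero]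
    positivity
  have hs : 0 < s := hr0.trans_le hrs
  have hB := one_add_mul_self_le_rpow_one_add (s := r / s - 1) (p := q + 1)
    (by have : 0 ≤ r / s := by positivity
        linarith) (by linarith)
  rw [add_sub_cancel, Real.div_rpow hr hs.le, Real.rpow_add_one hs.ne', Real.rpow_add_one hr0.ne'] at hB
  have hsq : 0 < s ^ q := Real.rpow_pos_of_pos hs q
  rw [le_div_iff₀ (by positivity)] at hB
  have e : (1 + (q + 1) * (r / s - 1)) * (s ^ q * s)
      = s ^ q * s + (q + 1) * s ^ q * (r - s) := by
    field_simp
  rw [e] at hB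
  nlinarith [mul_nonneg hsq.le (sub_nonneg.2 hrs)]

lemma aux_vec_wlog (q : ℝ) (hq : 0 < q) (x y : ℂ) (M : ℝ) (hx : ‖x‖ ≤ M) (hyx : ‖y‖ ≤ ‖x‖) :
    ‖‖x‖ ^ q • x - ‖y‖ ^ q • y‖ ≤ (q + 2) * M ^ q * ‖x - y‖ := by
  have e : ‖x‖ ^ q • x - ‖y‖ ^ q • y = ‖x‖ ^ q • (x - y) + (‖x‖ ^ q - ‖y‖ ^ q) • y := by
    module
  have h1 := aux_real q ‖x‖ ‖y‖ hq (norm_nonneg _) hyx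
  have h2 : ‖y‖ ^ q ≤ ‖x‖ ^ q := Real.rpow_le_rpow (norm_nonneg _) hyx hq.le
  have h3 : ‖x‖ ^ q ≤ M ^ q := Real.rpow_le_rpow (norm_nonneg _) hx hq.le
  have h0 : 0 ≤ ‖x‖ ^ q := by positivity
  have h4 : ‖x‖ - ‖y‖ ≤ ‖x - y‖ := norm_sub_norm_le x y
  calc ‖‖x‖ ^ q • x - ‖y‖ ^ q • y‖
      ≤ ‖x‖ ^ q * ‖x - y‖ + (‖x‖ ^ q - ‖y‖ ^ q) * ‖y‖ := by
        rw [e]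
        refine (norm_add_le _ _).trans ?_
        rw [norm_smul, norm_smul, Real.norm_of_nonneg h0, Real.norm_of_nonneg (sub_nonneg.2 h2)]
    _ ≤ ‖x‖ ^ q * ‖x - y‖ + (q + 1) * ‖x‖ ^ q * ‖x - y‖ := by
        have : (q + 1) * ‖x‖ ^ q * (‖x‖ - ‖y‖) ≤ (q + 1) * ‖x‖ ^ q * ‖x - y‖ := by gcongr
        linarith
    _ = (q + 2) * ‖x‖ ^ q * ‖x - y‖ := by ring
    _ ≤ _ := by gcongr

lemma aux_vec (q : ℝ) (hq : 0 < q) (x y : ℂ) (M : ℝ) (hx : ‖x‖ ≤ M) (hy : ‖y‖ ≤ M) :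
    ‖‖x‖ ^ q • x - ‖y‖ ^ q • y‖ ≤ (q + 2) * M ^ q * ‖x - y‖ := by
  rcases le_total ‖y‖ ‖x‖ with h | h
  · exact aux_vec_wlog q hq x y M hx h
  · rw [norm_sub_rev, norm_sub_rev x y]
    exact aux_vec_wlog q hq y x M hy h

lemma aux_deriv (p : ℝ) (hp : 2 < p) (a c : ℂ) (t : ℝ) :
    HasDerivAt (fun t : ℝ => ‖a + t • c‖ ^ p)
      (p * inner ℝ (‖a + t • c‖ ^ (p - 2) • (a + t • c)) c) t := by
  have h1 := hasFDerivAt_norm_rpow (a + t • c) (p := p) (by linarith)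
  have h2 : HasDerivAt (fun t : ℝ => a + t • c) c t := by
    simpa using ((hasDerivAt_id t).smul_const c).const_add a
  have h3 := h1.comp_hasDerivAt t h2
  have e : ((p * ‖a + t • c‖ ^ (p - 2)) • innerSL ℝ (a + t • c)) c
      = p * inner ℝ (‖a + t • c‖ ^ (p - 2) • (a + t • c)) c := by
    rw [real_inner_smul_left, ← mul_assoc]
    rfl
  rw [e] at h3
  exact h3

lemma aux_sum (q : ℝ) (hq : 0 < q) (x y z : ℝ) (hx : 0 ≤ x) (hy : 0 ≤ y) (hz : 0 ≤ z) :
    (x + y + z) ^ q ≤ 3 ^ q * (x ^ q + y ^ q + z ^ q) := by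
  have key : ∀ m : ℝ, 0 ≤ m → x ≤ m → y ≤ m → z ≤ m → (x + y + z) ^ q ≤ 3 ^ q * m ^ q := by
    intro m hm h1 h2 h3
    rw [← Real.mul_rpow (by norm_num) hm]
    exact Real.rpow_le_rpow (by positivity) (by linarith) hq.le
  have h3 : (0 : ℝ) ≤ 3 ^ q := by positivity
  have hx' := Real.rpow_nonneg hx q
  have hy' := Real.rpow_nonneg hy q
  have hz' := Real.rpow_nonneg hz q
  have fin : ∀ m : ℝ, m ≤ x ^ q + y ^ q + z ^ q → 3 ^ q * m ≤ 3 ^ q * (x ^ q + y ^ q + z ^ q) :=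
    fun m hm => mul_le_mul_of_nonneg_left hm h3
  rcases le_total x y with h | h <;> rcases le_total y z with h5 | h5 <;>
    rcases le_total x z with h6 | h6
  all_goals first
    | exact (key x hx le_rfl (by linarith) (by linarith)).trans (fin _ (by linarith))
    | exact (key y hy (by linarith) le_rfl (by linarith)).trans (fin _ (by linarith))
    | exact (key z hz (by linarith) (by linarith) le_rfl).trans (fin _ (by linarith))

/-- For `p > 2` there is `C = C(p) > 0` such that for all complex `a b c`,
`| |a+c|^p − |a|^p − |b+c|^p + |b|^p | ≤ C |a−b| |c| (|a|^{p−2} + |b|^{p−2} + |c|^{p−2})`. -/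
theorem second_difference_estimate_p_gt_two (p : ℝ) (hp : 2 < p) :
    ∃ C : ℝ, 0 < C ∧ ∀ a b c : ℂ,
      |‖a + c‖ ^ p - ‖a‖ ^ p - ‖b + c‖ ^ p + ‖b‖ ^ p|
        ≤ C * ‖a - b‖ * ‖c‖ * (‖a‖ ^ (p - 2) + ‖b‖ ^ (p - 2) + ‖c‖ ^ (p - 2)) := by
  have hp0 : 0 < p := by linarith
  refine ⟨p * p * 3 ^ (p - 2), by positivity, fun a b c => ?_⟩
  have hd : ∀ t ∈ Set.Icc (0 : ℝ) 1, HasDerivWithinAt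
      (fun t : ℝ => ‖a + t • c‖ ^ p - ‖b + t • c‖ ^ p)
      (p * inner ℝ (‖a + t • c‖ ^ (p - 2) • (a + t • c)) c
        - p * inner ℝ (‖b + t • c‖ ^ (p - 2) • (b + t • c)) c) (Set.Icc 0 1) t :=
    fun t _ => ((aux_deriv p hp a c t).sub (aux_deriv p hp b c t)).hasDerivWithinAt
  have hm := norm_image_sub_le_of_norm_deriv_le_segment_01' hd
    (C := p * (p * (‖a‖ + ‖b‖ + ‖c‖) ^ (p - 2) * ‖a - b‖ * ‖c‖)) (by
      intro t ht
      have htc : ‖t • c‖ ≤ ‖c‖ := by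
        rw [norm_smul, Real.norm_of_nonneg ht.1]
        exact mul_le_of_le_one_left (norm_nonneg _) ht.2.le
      have hv := aux_vec (p - 2) (by linarith) (a + t • c) (b + t • c) (‖a‖ + ‖b‖ + ‖c‖)
        (by linarith [norm_add_le a (t • c), norm_nonneg b])
        (by linarith [norm_add_le b (t • c), norm_nonneg a])
      rw [add_sub_add_right_eq_sub, sub_add_cancel] at hv
      rw [← mul_sub, ← inner_sub_left, norm_mul, Real.norm_of_nonneg hp0.le]
      refine mul_le_mul_of_nonneg_left ?_ hp0.le
      exact (norm_inner_le_norm _ _).trans (mul_le_mul_of_nonneg_right hv (norm_nonneg _)))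
  have hs := aux_sum (p - 2) (by linarith) ‖a‖ ‖b‖ ‖c‖ (norm_nonneg _) (norm_nonneg _) (norm_nonneg _)
  simp only [one_smul, zero_smul, add_zero, Real.norm_eq_abs] at hm
  calc |‖a + c‖ ^ p - ‖a‖ ^ p - ‖b + c‖ ^ p + ‖b‖ ^ p|
      = |‖a + c‖ ^ p - ‖b + c‖ ^ p - (‖a‖ ^ p - ‖b‖ ^ p)| := by congr 1; ring
    _ ≤ _ := hm
    _ = p * p * ‖a - b‖ * ‖c‖ * (‖a‖ + ‖b‖ + ‖c‖) ^ (p - 2) := by ring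
    _ ≤ p * p * ‖a - b‖ * ‖c‖ *
        (3 ^ (p - 2) * (‖a‖ ^ (p - 2) + ‖b‖ ^ (p - 2) + ‖c‖ ^ (p - 2))) :=
        mul_le_mul_of_nonneg_left hs (by positivity)
    _ = _ := by ring
end

section
/- Let 1 < p ≤ 2. There exists a constant C = C(p) > 0 such that for all complex numbers z and c one has | |z+c|^{p−2}(z+c) − |z|^{p−2} z | ≤ C · |c|^{p−1}, where by convention |w|^{p−2} w is understood to equal 0 when w = 0. -/
theorem gb_pow (p : ℝ) (hp1 : 1 < p) (x : ℝ) (hx : 0 ≤ x) :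
    x ^ (p - 2) * x = x ^ (p - 1) := by
  rcases hx.eq_or_lt with h | h
  · subst h
    rw [Real.zero_rpow (by linarith : p - 1 ≠ 0), mul_zero]
  · rw [← Real.rpow_add_one h.ne']
    congr 1
    ring

theorem gb_aux (p : ℝ) (hp1 : 1 < p) (hp2 : p ≤ 2) (a b : ℂ) (hab : ‖b‖ ≤ ‖a‖) :
    ‖(↑(‖a‖ ^ (p - 2)) : ℂ) * a - (↑(‖b‖ ^ (p - 2)) : ℂ) * b‖ ≤ 4 * ‖a - b‖ ^ (p - 1) := by
  have hA : 0 ≤ ‖a‖ ^ (p - 2) := by positivity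
  have h1 : ‖a‖ ^ (p - 2) * ‖a - b‖ ≤ 2 * ‖a - b‖ ^ (p - 1) := by
    rcases (norm_nonneg (a - b)).eq_or_lt with h | h
    · rw [← h, mul_zero]
      positivity
    · have hd : ‖a - b‖ / 2 ≤ ‖a‖ := by
        have := norm_sub_le a b
        linarith
      have h2 : ‖a‖ ^ (p - 2) ≤ (‖a - b‖ / 2) ^ (p - 2) :=
        Real.rpow_le_rpow_of_nonpos (by positivity) hd (by linarith)
      have h3 := gb_pow p hp1 (‖a - b‖ / 2) (by positivity)
      have h4 : (‖a - b‖ / 2) ^ (p - 1) ≤ ‖a - b‖ ^ (p - 1) :=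
        Real.rpow_le_rpow (by positivity) (by linarith) (by linarith)
      nlinarith
  have h2 : |‖a‖ ^ (p - 2) - ‖b‖ ^ (p - 2)| * ‖b‖ ≤ ‖a‖ ^ (p - 2) * ‖a - b‖ := by
    rcases (norm_nonneg b).eq_or_lt with h | h
    · rw [← h, mul_zero]
      positivity
    · have h5 : ‖a‖ ^ (p - 2) ≤ ‖b‖ ^ (p - 2) :=
        Real.rpow_le_rpow_of_nonpos h hab (by linarith)
      rw [abs_of_nonpos (by linarith)]
      have h6 := gb_pow p hp1 ‖a‖ (norm_nonneg a)
      have h7 := gb_pow p hp1 ‖b‖ (norm_nonneg b)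
      have h8 : ‖b‖ ^ (p - 1) ≤ ‖a‖ ^ (p - 1) :=
        Real.rpow_le_rpow h.le hab (by linarith)
      have h9 := mul_le_mul_of_nonneg_left (norm_sub_norm_le a b) hA
      linarith
  have e : (↑(‖a‖ ^ (p - 2)) : ℂ) * a - (↑(‖b‖ ^ (p - 2)) : ℂ) * b =
      (↑(‖a‖ ^ (p - 2)) : ℂ) * (a - b) + (↑(‖a‖ ^ (p - 2) - ‖b‖ ^ (p - 2)) : ℂ) * b := by
    push_cast
    ring
  rw [e]
  refine (norm_add_le _ _).trans ?_
  rw [norm_mul, norm_mul, Complex.norm_real, Complex.norm_real, Real.norm_eq_abs,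
    Real.norm_eq_abs, abs_of_nonneg hA]
  linarith

/-- For `1 < p ≤ 2` there is `C = C(p) > 0` such that for all complex `z c`,
`| |z+c|^{p−2}(z+c) − |z|^{p−2} z | ≤ C |c|^{p−1}`. (Note that the expression
`(‖w‖ ^ (p - 2) : ℝ) * w` vanishes automatically when `w = 0`.) -/
theorem gradient_bound (p : ℝ) (hp1 : 1 < p) (hp2 : p ≤ 2) :
    ∃ C : ℝ, 0 < C ∧ ∀ z c : ℂ,
      ‖(↑(‖z + c‖ ^ (p - 2)) : ℂ) * (z + c) - (↑(‖z‖ ^ (p - 2)) : ℂ) * z‖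
        ≤ C * ‖c‖ ^ (p - 1) := by
  refine ⟨4, by norm_num, fun z c => ?_⟩
  rcases le_total ‖z‖ ‖z + c‖ with h | h
  · simpa using gb_aux p hp1 hp2 (z + c) z h
  · have := gb_aux p hp1 hp2 z (z + c) h
    rw [norm_sub_rev]
    simpa using this
end

section
/- Let q ≥ 1 be a real number and let J be a positive integer. There exists a constant C = C(J, q) > 0 such that for all complex numbers v_1, …, v_J one has | |v_1 + ⋯ + v_J|^q − Σ_{j=1}^J |v_j|^q | ≤ C · Σ_{j≠k} |v_j|^{q−1} |v_k|, where the last sum runs over all ordered pairs (j,k) with 1 ≤ j, k ≤ J and j ≠ k. -/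
open Finset

theorem aux_rpow_lip (q : ℝ) (hq : 1 ≤ q) (L a b : ℝ) (ha : 0 ≤ a) (haL : a ≤ L)
    (hb : 0 ≤ b) (hbL : b ≤ L) :
    |a ^ q - b ^ q| ≤ q * L ^ (q - 1) * |a - b| := by
  have h := Convex.norm_image_sub_le_of_norm_hasDerivWithin_le
    (f := fun x : ℝ => x ^ q) (f' := fun x : ℝ => q * x ^ (q - 1)) (C := q * L ^ (q - 1))
    (s := Set.Icc 0 L) (x := b) (y := a)
    (fun x _ => (Real.hasDerivAt_rpow_const (Or.inr hq)).hasDerivWithinAt)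
    (by
      intro x hx
      have h0 : 0 ≤ x ^ (q - 1) := Real.rpow_nonneg hx.1 _
      rw [Real.norm_of_nonneg (by positivity)]
      exact mul_le_mul_of_nonneg_left (Real.rpow_le_rpow hx.1 hx.2 (by linarith)) (by linarith))
    (convex_Icc 0 L) ⟨hb, hbL⟩ ⟨ha, haL⟩
  simpa [Real.norm_eq_abs] using h

/-- For real `q ≥ 1` and a positive integer `J`, there is `C = C(J,q) > 0` such that
for all complex `v_1, …, v_J`,
`| |Σ v_j|^q − Σ |v_j|^q | ≤ C Σ_{j≠k} |v_j|^{q−1} |v_k|`. -/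
theorem scattering_size_decoupling (q : ℝ) (hq : 1 ≤ q) (J : ℕ) (hJ : 0 < J) :
    ∃ C : ℝ, 0 < C ∧ ∀ v : Fin J → ℂ,
      |‖∑ j, v j‖ ^ q - ∑ j, ‖v j‖ ^ q|
        ≤ C * ∑ j, ∑ k, if j ≠ k then ‖v j‖ ^ (q - 1) * ‖v k‖ else 0 := by
  have hJ1 : (1 : ℝ) ≤ J := by exact_mod_cast hJ
  refine ⟨q * (J : ℝ) ^ (q - 1) + 1, by positivity, fun v => ?_⟩
  haveI : Nonempty (Fin J) := ⟨⟨0, hJ⟩⟩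
  obtain ⟨m, hm⟩ := Finite.exists_max (fun j => ‖v j‖)
  have hM0 : 0 ≤ ‖v m‖ := norm_nonneg _
  have hP0 : 0 ≤ ‖v m‖ ^ (q - 1) := Real.rpow_nonneg hM0 _
  have hK0 : 0 ≤ (J : ℝ) ^ (q - 1) := by positivity
  set R : ℝ := ∑ k ∈ univ.erase m, ‖v k‖ with hR
  -- the right-hand side dominates the row of the maximal index
  have hrow : ‖v m‖ ^ (q - 1) * R
      ≤ ∑ j, ∑ k, if j ≠ k then ‖v j‖ ^ (q - 1) * ‖v k‖ else 0 := by
    have h1 : ‖v m‖ ^ (q - 1) * R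
        = ∑ k, if m ≠ k then ‖v m‖ ^ (q - 1) * ‖v k‖ else 0 := by
      rw [hR, mul_sum, ← sum_filter]
      refine sum_congr ?_ fun _ _ => rfl
      ext k
      simp [eq_comm]
    rw [h1]
    refine single_le_sum
      (f := fun j => ∑ k, if j ≠ k then ‖v j‖ ^ (q - 1) * ‖v k‖ else 0) ?_ (mem_univ m)
    intro j _
    refine sum_nonneg fun k _ => ?_
    split_ifs
    · positivity
    · exact le_rfl
  have hsum : ∑ j, v j = v m + ∑ k ∈ univ.erase m, v k :=
    (add_sum_erase univ v (mem_univ m)).symm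
  have hsumq : ∑ j, ‖v j‖ ^ q = ‖v m‖ ^ q + ∑ k ∈ univ.erase m, ‖v k‖ ^ q :=
    (add_sum_erase univ (fun j => ‖v j‖ ^ q) (mem_univ m)).symm
  have hdiff : |‖∑ j, v j‖ - ‖v m‖| ≤ R := by
    refine (abs_norm_sub_norm_le _ _).trans ?_
    rw [hsum, add_sub_cancel_left]
    exact norm_sum_le _ _
  have hS : ‖∑ j, v j‖ ≤ J * ‖v m‖ := by
    refine (norm_sum_le _ _).trans ?_
    refine (sum_le_card_nsmul univ _ _ fun j _ => hm j).trans ?_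
    simp
  have hmain := aux_rpow_lip q hq (J * ‖v m‖) ‖∑ j, v j‖ ‖v m‖ (norm_nonneg _) hS hM0
    (le_mul_of_one_le_left hM0 hJ1)
  rw [Real.mul_rpow (by positivity) hM0] at hmain
  have hT : ∑ k ∈ univ.erase m, ‖v k‖ ^ q ≤ ‖v m‖ ^ (q - 1) * R := by
    rw [hR, mul_sum]
    refine sum_le_sum fun k _ => ?_
    have h2 : ‖v k‖ ^ q = ‖v k‖ ^ (q - 1) * ‖v k‖ := by
      have := Real.rpow_add_one' (norm_nonneg (v k)) (y := q - 1) (by linarith)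
      simpa using this
    rw [h2]
    exact mul_le_mul_of_nonneg_right
      (Real.rpow_le_rpow (norm_nonneg _) (hm k) (by linarith)) (norm_nonneg _)
  have hT0 : 0 ≤ ∑ k ∈ univ.erase m, ‖v k‖ ^ q :=
    sum_nonneg fun k _ => Real.rpow_nonneg (norm_nonneg _) _
  have hmain2 : |‖∑ j, v j‖ ^ q - ‖v m‖ ^ q|
      ≤ q * ((J : ℝ) ^ (q - 1) * ‖v m‖ ^ (q - 1)) * R :=
    hmain.trans (mul_le_mul_of_nonneg_left hdiff (by positivity))
  calc |‖∑ j, v j‖ ^ q - ∑ j, ‖v j‖ ^ q|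
      ≤ (q * (J : ℝ) ^ (q - 1) + 1) * (‖v m‖ ^ (q - 1) * R) := by
        rw [hsumq]
        rw [abs_le] at hmain2 ⊢
        constructor <;> nlinarith [hmain2.1, hmain2.2]
    _ ≤ _ := mul_le_mul_of_nonneg_left hrow (by positivity)
end

section
/- Let p > 0 and let J be a positive integer, and set F(z) = |z|^p z for complex z. There exists a constant C = C(J, p) > 0 such that for all complex numbers v_1, …, v_J one has | F(v_1 + ⋯ + v_J) − Σ_{j=1}^J F(v_j) | ≤ C · Σ_{j≠k} |v_j| · |v_k|^p, where the last sum runs over all ordered pairs (j,k) with 1 ≤ j, k ≤ J and j ≠ k. -/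
open Finset

lemma npd_pow_aux (p : ℝ) (hp : 0 < p) :
    ∃ C : ℝ, 0 ≤ C ∧ ∀ t : ℝ, 0 ≤ t → t ≤ 2 → |t ^ p - 1| ≤ C * |t - 1| := by
  obtain ⟨n, hn⟩ := exists_nat_ge p
  have key : ∀ n : ℕ, ∃ C : ℝ, 0 ≤ C ∧ ∀ t : ℝ, 0 ≤ t → t ≤ 2 → |t ^ n - 1| ≤ C * |t - 1| := by
    intro n
    induction n with
    | zero => exact ⟨0, le_rfl, by intro t _ _; simp⟩
    | succ k ih =>
      obtain ⟨C, hC, h⟩ := ih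
      refine ⟨2 * C + 1, by positivity, fun t h0 h2 => ?_⟩
      have e : t ^ (k + 1) - 1 = t * (t ^ k - 1) + (t - 1) := by ring
      rw [e]
      refine (abs_add_le _ _).trans ?_
      rw [abs_mul, abs_of_nonneg h0]
      have h1 := h t h0 h2
      have h3 := mul_le_mul h2 h1 (abs_nonneg _) (by norm_num)
      linarith
  obtain ⟨C, hC, h⟩ := key n
  refine ⟨C, hC, fun t h0 h2 => le_trans ?_ (h t h0 h2)⟩
  rcases le_total t 1 with h1 | h1
  · have a1 : t ^ p ≤ 1 := Real.rpow_le_one h0 h1 hp.le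
    have a2 : t ^ n ≤ t ^ p := by
      rcases h0.eq_or_lt with h0 | h0
      · subst h0
        have : n ≠ 0 := by
          rintro rfl
          norm_num at hn
          linarith
        simp [this, Real.zero_rpow hp.ne']
      · rw [← Real.rpow_natCast]
        exact Real.rpow_le_rpow_of_exponent_ge h0 h1 hn
    rw [abs_of_nonpos (by linarith), abs_of_nonpos (by linarith)]
    linarith
  · have a1 : 1 ≤ t ^ p := Real.one_le_rpow h1 hp.le
    have a2 : t ^ p ≤ t ^ n := by
      rw [← Real.rpow_natCast]
      exact Real.rpow_le_rpow_of_exponent_le h1 hn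
    rw [abs_of_nonneg (by linarith), abs_of_nonneg (by linarith)]
    linarith

lemma npd_two_aux (p : ℝ) (hp : 0 < p) :
    ∃ C : ℝ, 0 ≤ C ∧ ∀ a b : ℂ, ‖b‖ ≤ ‖a‖ →
      ‖(↑(‖a + b‖ ^ p) : ℂ) * (a + b) - (↑(‖a‖ ^ p) : ℂ) * a - (↑(‖b‖ ^ p) : ℂ) * b‖
        ≤ C * (‖b‖ * ‖a‖ ^ p) := by
  obtain ⟨C, hC, h⟩ := npd_pow_aux p hp
  refine ⟨2 ^ p + C + 1, by positivity, fun a b hab => ?_⟩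
  rcases (norm_nonneg a).eq_or_lt with ha | ha
  · have a0 : a = 0 := norm_eq_zero.1 ha.symm
    have b0 : b = 0 := by rw [← norm_eq_zero]; exact le_antisymm (by linarith) (norm_nonneg _)
    simp [a0, b0]
  have hx : ‖a + b‖ ≤ 2 * ‖a‖ := (norm_add_le a b).trans (by linarith)
  have e : (↑(‖a + b‖ ^ p) : ℂ) * (a + b) - (↑(‖a‖ ^ p) : ℂ) * a - (↑(‖b‖ ^ p) : ℂ) * b
    = (↑(‖a + b‖ ^ p) : ℂ) * b + (↑(‖a + b‖ ^ p - ‖a‖ ^ p) : ℂ) * a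
      - (↑(‖b‖ ^ p) : ℂ) * b := by push_cast; ring
  rw [e]
  refine (norm_sub_le _ _).trans ((add_le_add_left (norm_add_le _ _) _).trans ?_)
  simp only [norm_mul, Complex.norm_real, Real.norm_eq_abs]
  rw [abs_of_nonneg (by positivity : 0 ≤ ‖a + b‖ ^ p), abs_of_nonneg (by positivity : 0 ≤ ‖b‖ ^ p)]
  have h1 : ‖a + b‖ ^ p ≤ 2 ^ p * ‖a‖ ^ p := by
    rw [← Real.mul_rpow (by norm_num) ha.le]
    exact Real.rpow_le_rpow (norm_nonneg _) hx hp.le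
  have h2 : ‖b‖ ^ p ≤ ‖a‖ ^ p := Real.rpow_le_rpow (norm_nonneg _) hab hp.le
  have h3 : |‖a + b‖ ^ p - ‖a‖ ^ p| * ‖a‖ ≤ C * (‖b‖ * ‖a‖ ^ p) := by
    have k := h (‖a + b‖ / ‖a‖) (by positivity) (by rw [div_le_iff₀ ha]; exact hx)
    have hap : 0 < ‖a‖ ^ p := by positivity
    have e1 : ‖a + b‖ ^ p - ‖a‖ ^ p = ‖a‖ ^ p * ((‖a + b‖ / ‖a‖) ^ p - 1) := by
      rw [Real.div_rpow (norm_nonneg _) ha.le]; field_simp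
    have e2 : |‖a + b‖ / ‖a‖ - 1| * ‖a‖ ≤ ‖b‖ := by
      nth_rewrite 2 [← abs_of_pos ha]
      rw [← abs_mul, sub_mul, div_mul_cancel₀ _ ha.ne', one_mul]
      simpa using abs_norm_sub_norm_le (a + b) a
    rw [e1, abs_mul, abs_of_pos hap]
    calc _ ≤ ‖a‖ ^ p * (C * |‖a + b‖ / ‖a‖ - 1|) * ‖a‖ := by gcongr
      _ = ‖a‖ ^ p * C * (|‖a + b‖ / ‖a‖ - 1| * ‖a‖) := by ring
      _ ≤ ‖a‖ ^ p * C * ‖b‖ := by gcongr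
      _ = _ := by ring
  have h4 := mul_le_mul_of_nonneg_right h1 (norm_nonneg b)
  have h5 := mul_le_mul_of_nonneg_right h2 (norm_nonneg b)
  linarith

lemma npd_two (p : ℝ) (hp : 0 < p) :
    ∃ C : ℝ, 0 ≤ C ∧ ∀ a b : ℂ,
      ‖(↑(‖a + b‖ ^ p) : ℂ) * (a + b) - (↑(‖a‖ ^ p) : ℂ) * a - (↑(‖b‖ ^ p) : ℂ) * b‖
        ≤ C * (‖a‖ * ‖b‖ ^ p + ‖b‖ * ‖a‖ ^ p) := by
  obtain ⟨C, hC, h⟩ := npd_two_aux p hp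
  refine ⟨C, hC, fun a b => ?_⟩
  have n1 : 0 ≤ C * (‖a‖ * ‖b‖ ^ p) := by positivity
  have n2 : 0 ≤ C * (‖b‖ * ‖a‖ ^ p) := by positivity
  rcases le_total ‖b‖ ‖a‖ with hab | hab
  · have := h a b hab
    linarith
  · have := h b a hab
    rw [add_comm b a, sub_right_comm] at this
    linarith

lemma npd_sum_pow (p : ℝ) (hp : 0 < p) (J : ℕ) :
    ∃ C : ℝ, 0 ≤ C ∧ ∀ v : Fin J → ℂ, ‖∑ j, v j‖ ^ p ≤ C * ∑ j, ‖v j‖ ^ p := by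
  induction J with
  | zero => exact ⟨0, le_rfl, fun v => by simp [Real.zero_rpow hp.ne']⟩
  | succ n ih =>
    obtain ⟨C, hC, h⟩ := ih
    refine ⟨2 ^ p * (C + 1), by positivity, fun v => ?_⟩
    rw [Fin.sum_univ_castSucc, Fin.sum_univ_castSucc]
    have h1 := h (fun j => v j.castSucc)
    set S := ∑ j : Fin n, v j.castSucc
    set T := ∑ j : Fin n, ‖v j.castSucc‖ ^ p
    set w := v (Fin.last n)
    have hT : 0 ≤ T := Finset.sum_nonneg fun _ _ => by positivity
    have h2 : ‖S + w‖ ^ p ≤ 2 ^ p * (‖S‖ ^ p + ‖w‖ ^ p) := by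
      have hs : 0 ≤ ‖S‖ ^ p := by positivity
      have hw : 0 ≤ ‖w‖ ^ p := by positivity
      rcases le_total ‖S‖ ‖w‖ with k | k
      · calc _ ≤ (2 * ‖w‖) ^ p :=
              Real.rpow_le_rpow (norm_nonneg _) ((norm_add_le _ _).trans (by linarith)) hp.le
          _ = 2 ^ p * ‖w‖ ^ p := Real.mul_rpow (by norm_num) (norm_nonneg _)
          _ ≤ _ := by gcongr; linarith
      · calc _ ≤ (2 * ‖S‖) ^ p :=
              Real.rpow_le_rpow (norm_nonneg _) ((norm_add_le _ _).trans (by linarith)) hp.le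
          _ = 2 ^ p * ‖S‖ ^ p := Real.mul_rpow (by norm_num) (norm_nonneg _)
          _ ≤ _ := by gcongr; linarith
    refine h2.trans ?_
    rw [mul_assoc]
    have hw : 0 ≤ C * ‖w‖ ^ p := by positivity
    gcongr
    linarith

lemma npd_main (p : ℝ) (hp : 0 < p) (J : ℕ) :
    ∃ C : ℝ, 0 ≤ C ∧ ∀ v : Fin J → ℂ,
      ‖(↑(‖∑ j, v j‖ ^ p) : ℂ) * (∑ j, v j) - ∑ j, (↑(‖v j‖ ^ p) : ℂ) * v j‖
        ≤ C * ∑ j, ∑ k, if j ≠ k then ‖v j‖ * ‖v k‖ ^ p else 0 := by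
  induction J with
  | zero => exact ⟨0, le_rfl, fun v => by simp⟩
  | succ n ih =>
    obtain ⟨C, hC, h⟩ := ih
    obtain ⟨D, hD, hd⟩ := npd_two p hp
    obtain ⟨E, hE, he⟩ := npd_sum_pow p hp n
    refine ⟨C + D * (E + 1), by positivity, fun v => ?_⟩
    have e : (∑ j, ∑ k, if j ≠ k then ‖v j‖ * ‖v k‖ ^ p else 0)
        = (∑ j : Fin n, ∑ k : Fin n,
            if j ≠ k then ‖v j.castSucc‖ * ‖v k.castSucc‖ ^ p else 0)
          + (∑ j : Fin n, ‖v j.castSucc‖) * ‖v (Fin.last n)‖ ^ p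
          + ‖v (Fin.last n)‖ * ∑ j : Fin n, ‖v j.castSucc‖ ^ p := by
      have l1 : ∀ j : Fin n, Fin.last n ≠ j.castSucc := fun j => (Fin.castSucc_lt_last j).ne'
      have l2 : ∀ j : Fin n, j.castSucc ≠ Fin.last n := fun j => (Fin.castSucc_lt_last j).ne
      simp only [Fin.sum_univ_castSucc, ne_eq, Fin.castSucc_inj, l1, l2, not_false_eq_true,
        if_true, not_true_eq_false, if_false, add_zero, Finset.sum_add_distrib,
        Finset.sum_mul, Finset.mul_sum]
      ring
    rw [e]
    simp only [Fin.sum_univ_castSucc]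
    have h1 := h (fun j => v j.castSucc)
    have h2 := he (fun j => v j.castSucc)
    have h3 : ‖∑ j : Fin n, v j.castSucc‖ ≤ ∑ j : Fin n, ‖v j.castSucc‖ := norm_sum_le _ _
    have hQ : 0 ≤ ∑ j : Fin n, ∑ k : Fin n,
            if j ≠ k then ‖v j.castSucc‖ * ‖v k.castSucc‖ ^ p else 0 :=
      Finset.sum_nonneg fun _ _ => Finset.sum_nonneg fun _ _ => by split_ifs <;> positivity
    have hT : 0 ≤ ∑ j : Fin n, ‖v j.castSucc‖ ^ p := Finset.sum_nonneg fun _ _ => by positivity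
    have hN : 0 ≤ ∑ j : Fin n, ‖v j.castSucc‖ := Finset.sum_nonneg fun _ _ => by positivity
    have h4 := hd (∑ j : Fin n, v j.castSucc) (v (Fin.last n))
    beta_reduce at h1 h2
    generalize (∑ j : Fin n, ∑ k : Fin n,
            if j ≠ k then ‖v j.castSucc‖ * ‖v k.castSucc‖ ^ p else 0) = Q at *
    generalize (∑ j : Fin n, ‖v j.castSucc‖ ^ p) = T at *
    generalize (∑ j : Fin n, ‖v j.castSucc‖) = N at *
    generalize (∑ j : Fin n, (↑(‖v j.castSucc‖ ^ p) : ℂ) * v j.castSucc) = G at *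
    generalize (∑ j : Fin n, v j.castSucc) = S at *
    generalize v (Fin.last n) = w at *
    have e3 : (↑(‖S + w‖ ^ p) : ℂ) * (S + w) - (G + (↑(‖w‖ ^ p) : ℂ) * w)
      = ((↑(‖S + w‖ ^ p) : ℂ) * (S + w) - (↑(‖S‖ ^ p) : ℂ) * S - (↑(‖w‖ ^ p) : ℂ) * w)
        + ((↑(‖S‖ ^ p) : ℂ) * S - G) := by ring
    rw [e3]
    refine (norm_add_le _ _).trans ((add_le_add h4 h1).trans ?_)
    have hw : 0 ≤ ‖w‖ ^ p := by positivity
    calc D * (‖S‖ * ‖w‖ ^ p + ‖w‖ * ‖S‖ ^ p) + C * Q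
        ≤ D * (N * ‖w‖ ^ p + ‖w‖ * (E * T)) + C * Q := by gcongr
      _ ≤ D * (N * ‖w‖ ^ p + ‖w‖ * (E * T)) + C * Q
          + (C * (N * ‖w‖ ^ p + ‖w‖ * T) + D * (E + 1) * Q
            + D * E * (N * ‖w‖ ^ p) + D * (‖w‖ * T)) :=
          le_add_of_nonneg_right (by positivity)
      _ = _ := by ring

/-- For `p > 0` and a positive integer `J`, with `F(z) = |z|^p z`, there is
`C = C(J,p) > 0` such that for all complex `v_1, …, v_J`,
`| F(Σ v_j) − Σ F(v_j) | ≤ C Σ_{j≠k} |v_j| |v_k|^p`. -/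
theorem nonlinear_profile_decoupling (p : ℝ) (hp : 0 < p) (J : ℕ) (hJ : 0 < J) :
    ∃ C : ℝ, 0 < C ∧ ∀ v : Fin J → ℂ,
      ‖(↑(‖∑ j, v j‖ ^ p) : ℂ) * (∑ j, v j) - ∑ j, (↑(‖v j‖ ^ p) : ℂ) * v j‖
        ≤ C * ∑ j, ∑ k, if j ≠ k then ‖v j‖ * ‖v k‖ ^ p else 0 := by
  obtain ⟨C, hC, h⟩ := npd_main p hp J
  refine ⟨C + 1, by positivity, fun v => (h v).trans ?_⟩
  refine mul_le_mul_of_nonneg_right (by linarith) ?_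
  exact Finset.sum_nonneg fun _ _ => Finset.sum_nonneg fun _ _ => by split_ifs <;> positivity
end

section
/- Let p ≥ 1. There exists a constant C = C(p) > 0 such that for all complex numbers f and g one has | |f+g|^p (f+g) − |f|^p f − |g|^p g | ≤ C · |f| · |g| · ( |f|^{p−1} + |g|^{p−1} ). -/
lemma rpow_diff_aux (p : ℝ) (hp : 1 ≤ p) (M a b : ℝ) (ha : 0 ≤ a) (hb : 0 ≤ b)
    (haM : a ≤ M) (hbM : b ≤ M) : |a ^ p - b ^ p| ≤ p * M ^ (p - 1) * |a - b| := by
  have h := Convex.norm_image_sub_le_of_norm_hasDerivWithin_le (𝕜 := ℝ) (s := Set.Icc 0 M)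
    (f := fun x : ℝ => x ^ p) (f' := fun x => p * x ^ (p - 1)) (C := p * M ^ (p - 1))
    (x := b) (y := a)
    (fun x _ => (Real.hasDerivAt_rpow_const (Or.inr hp)).hasDerivWithinAt)
    (fun x hx => by
      have h0 : 0 ≤ x ^ (p - 1) := Real.rpow_nonneg hx.1 _
      rw [Real.norm_eq_abs, abs_of_nonneg (by positivity)]
      exact mul_le_mul_of_nonneg_left
        (Real.rpow_le_rpow hx.1 hx.2 (by linarith)) (by linarith))
    (convex_Icc 0 M) ⟨hb, hbM⟩ ⟨ha, haM⟩
  simpa [Real.norm_eq_abs] using h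

lemma rpow_add_aux (q : ℝ) (hq : 0 ≤ q) (a b : ℝ) (ha : 0 ≤ a) (hb : 0 ≤ b) :
    (a + b) ^ q ≤ 2 ^ q * (a ^ q + b ^ q) := by
  have h1 : 0 ≤ a ^ q := Real.rpow_nonneg ha _
  have h2 : 0 ≤ b ^ q := Real.rpow_nonneg hb _
  have h3 : (0 : ℝ) ≤ 2 ^ q := by positivity
  rcases le_total a b with h | h
  · calc (a + b) ^ q ≤ (2 * b) ^ q := Real.rpow_le_rpow (by linarith) (by linarith) hq
      _ = 2 ^ q * b ^ q := Real.mul_rpow (by norm_num) hb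
      _ ≤ _ := mul_le_mul_of_nonneg_left (by linarith) h3
  · calc (a + b) ^ q ≤ (2 * a) ^ q := Real.rpow_le_rpow (by linarith) (by linarith) hq
      _ = 2 ^ q * a ^ q := Real.mul_rpow (by norm_num) ha
      _ ≤ _ := mul_le_mul_of_nonneg_left (by linarith) h3

/-- For `p ≥ 1` there is `C = C(p) > 0` such that for all complex `f g`,
`| |f+g|^p(f+g) − |f|^p f − |g|^p g | ≤ C |f| |g| (|f|^{p−1} + |g|^{p−1})`. -/
theorem nonlinearity_cross_term_bound (p : ℝ) (hp : 1 ≤ p) :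
    ∃ C : ℝ, 0 < C ∧ ∀ f g : ℂ,
      ‖(↑(‖f + g‖ ^ p) : ℂ) * (f + g) - (↑(‖f‖ ^ p) : ℂ) * f - (↑(‖g‖ ^ p) : ℂ) * g‖
        ≤ C * ‖f‖ * ‖g‖ * (‖f‖ ^ (p - 1) + ‖g‖ ^ (p - 1)) := by
  have hp0 : 0 < p := by linarith
  refine ⟨2 * p * 2 ^ (p - 1), by positivity, fun f g => ?_⟩
  have hf := norm_nonneg f
  have hg := norm_nonneg g
  have hM : 0 ≤ p * (‖f‖ + ‖g‖) ^ (p - 1) := by positivity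
  have d1 : |‖f + g‖ - ‖f‖| ≤ ‖g‖ := by
    simpa using abs_norm_sub_norm_le (f + g) f
  have d2 : |‖f + g‖ - ‖g‖| ≤ ‖f‖ := by
    simpa using abs_norm_sub_norm_le (f + g) g
  have e1 := (rpow_diff_aux p hp (‖f‖ + ‖g‖) ‖f + g‖ ‖f‖ (norm_nonneg _) hf
    (norm_add_le f g) (by linarith)).trans (mul_le_mul_of_nonneg_left d1 hM)
  have e2 := (rpow_diff_aux p hp (‖f‖ + ‖g‖) ‖f + g‖ ‖g‖ (norm_nonneg _) hg
    (norm_add_le f g) (by linarith)).trans (mul_le_mul_of_nonneg_left d2 hM)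
  have e3 := rpow_add_aux (p - 1) (by linarith) ‖f‖ ‖g‖ hf hg
  have key : (↑(‖f + g‖ ^ p) : ℂ) * (f + g) - (↑(‖f‖ ^ p) : ℂ) * f - (↑(‖g‖ ^ p) : ℂ) * g
      = (↑(‖f + g‖ ^ p - ‖f‖ ^ p) : ℂ) * f + (↑(‖f + g‖ ^ p - ‖g‖ ^ p) : ℂ) * g := by
    push_cast
    ring
  rw [key]
  calc _ ≤ |‖f + g‖ ^ p - ‖f‖ ^ p| * ‖f‖ + |‖f + g‖ ^ p - ‖g‖ ^ p| * ‖g‖ := by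
        refine (norm_add_le _ _).trans (le_of_eq ?_)
        rw [norm_mul, norm_mul, Complex.norm_real, Complex.norm_real, Real.norm_eq_abs,
          Real.norm_eq_abs]
    _ ≤ (p * (‖f‖ + ‖g‖) ^ (p - 1) * ‖g‖) * ‖f‖ + (p * (‖f‖ + ‖g‖) ^ (p - 1) * ‖f‖) * ‖g‖ :=
        add_le_add (mul_le_mul_of_nonneg_right e1 hf) (mul_le_mul_of_nonneg_right e2 hg)
    _ = (2 * p * ‖f‖ * ‖g‖) * (‖f‖ + ‖g‖) ^ (p - 1) := by ring
    _ ≤ (2 * p * ‖f‖ * ‖g‖) * (2 ^ (p - 1) * (‖f‖ ^ (p - 1) + ‖g‖ ^ (p - 1))) :=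
        mul_le_mul_of_nonneg_left e3 (by positivity)
    _ = _ := by ring
end
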